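/- arXiv:1812.11259 — 2 statements merged into one kernel-verified Lean document; each statement's English description precedes it below -/
import Mathlib

section
/- There exist a *-probability space (A, φ) and elements x, y ∈ A such that the pair (x, y) is η-diagonal, but the two pairs of non-unital subalgebras (alg(xx*), alg(yy*)) and (alg(x*x), alg(y*y)) — where alg(a) denotes the non-unital subalgebra of A generated by a — are not bi-Boolean independent. -/
open scoped BigOperators

/-- Rank realizing the χ-order: left indices in increasing order, then right indices
in decreasing order. `true` stands for `l`, `false` for `r`. -/
def chiRank {n : ℕ} (χ : Fin n → Bool) (i : Fin n) : ℕ :=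
  if χ i then (i : ℕ) else 2 * n - (i : ℕ)

/-- The strict order `≺_χ`. -/
def chiLT {n : ℕ} (χ : Fin n → Bool) (i j : Fin n) : Prop :=
  chiRank χ i < chiRank χ j

/-- A finset is a χ-interval iff it is order-convex for `≺_χ`. -/
def IsChiInterval {n : ℕ} (χ : Fin n → Bool) (V : Finset (Fin n)) : Prop :=
  ∀ i j k : Fin n, i ∈ V → k ∈ V → chiLT χ i j → chiLT χ j k → j ∈ V

/-- A set partition of `{1, …, n}` encoded as a finset of (nonempty) blocks. -/
def IsPartition {n : ℕ} (P : Finset (Finset (Fin n))) : Prop :=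
  (∅ ∉ P) ∧ ∀ i : Fin n, ∃! V : Finset (Fin n), V ∈ P ∧ i ∈ V

open scoped Classical in
/-- The set of bi-interval partitions relative to χ. -/
noncomputable def BIset {n : ℕ} (χ : Fin n → Bool) : Finset (Finset (Finset (Fin n))) :=
  Finset.univ.filter (fun P => IsPartition P ∧ ∀ V ∈ P, IsChiInterval χ V)

/-- `φ_V(a₁,…,aₙ)`: apply φ to the product of the `a_i`, `i ∈ V`, in increasing index order. -/
def phiV {A : Type*} [Monoid A] (φ : A → ℂ) {n : ℕ} (a : Fin n → A) (V : Finset (Fin n)) : ℂ :=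
  φ ((V.sort (· ≤ ·)).map a).prod

/-- The Boolean (l,r)-cumulant `B_χ`. -/
noncomputable def Bcum {A : Type*} [Monoid A] (φ : A → ℂ) {n : ℕ} (χ : Fin n → Bool)
    (a : Fin n → A) : ℂ :=
  ∑ P ∈ BIset χ, (-1 : ℂ) ^ (P.card - 1) * ∏ V ∈ P, phiV φ a V

/-- The list of indices `1, …, n` sorted in the `≺_χ` order. -/
def chiSorted {n : ℕ} (χ : Fin n → Bool) : List (Fin n) :=
  (List.finRange n).mergeSort (fun i j => chiRank χ i ≤ chiRank χ j)

/-- The element of the pair `(x, y)` selected by side (`true` = `x`-side) and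
star-parity (`true` = starred). -/
def pairElem {A : Type*} [Monoid A] [StarMul A] (x y : A) : Bool → Bool → A
  | true, false => x
  | true, true => star x
  | false, false => y
  | false, true => star y

/-- A pair `(x, y)` in a `*`-probability space is η-diagonal. -/
def EtaDiagonalPair {A : Type*} [Monoid A] [StarMul A] (φ : A → ℂ) (x y : A) : Prop :=
  ∀ n : ℕ, 1 ≤ n → ∀ χ ε : Fin n → Bool,
    ¬ (Even n ∧ ((chiSorted χ).map ε).Chain' (· ≠ ·)) →
    Bcum φ χ (fun i => pairElem x y (χ i) (ε i)) = 0

/-- `P` refines `Q`. -/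
def Refines {n : ℕ} (P Q : Finset (Finset (Fin n))) : Prop :=
  ∀ V ∈ P, ∃ W ∈ Q, V ⊆ W

/-- Every block of `P` lies inside a level set of `ω`. -/
def KernelPart {n : ℕ} {K : Type*} (ω : Fin n → K) (P : Finset (Finset (Fin n))) : Prop :=
  ∀ V ∈ P, ∀ i ∈ V, ∀ j ∈ V, ω i = ω j

/-- `P` is the largest bi-interval partition relative to χ all of whose blocks are
contained in level sets of ω, i.e. `P = π_{ω,χ}`. -/
def IsMaxKernelBI {n : ℕ} {K : Type*} (χ : Fin n → Bool) (ω : Fin n → K)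
    (P : Finset (Finset (Fin n))) : Prop :=
  P ∈ BIset χ ∧ KernelPart ω P ∧ ∀ Q ∈ BIset χ, KernelPart ω Q → Refines Q P

/-- Bi-Boolean independence of a family of pairs of non-unital subalgebras. -/
def BiBooleanIndep {A : Type*} [Ring A] [Algebra ℂ A] (φ : A → ℂ) {K : Type*}
    (Al Ar : K → NonUnitalSubalgebra ℂ A) : Prop :=
  ∀ n : ℕ, 1 ≤ n → ∀ χ : Fin n → Bool, ∀ ω : Fin n → K, ∀ a : Fin n → A,
    (∀ i, a i ∈ (if χ i then Al (ω i) else Ar (ω i))) →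
    ∀ P : Finset (Finset (Fin n)), IsMaxKernelBI χ ω P →
      φ (List.ofFn a).prod = ∏ V ∈ P, phiV φ a V

/-!
Let `φ` vanish on non-empty words which involve only `x, x*` or only `y, y*`. Two `≺_χ`-intervals
which both contain left and right indices meet, so only the bi-interval partition with a single
block can contribute to `B_χ`: cumulants coincide with moments, and η-diagonality becomes a
condition on the moments of `(x, y)`. It allows `φ(xx* y*y) ≠ 0`, whereas bi-Boolean independence
would force `φ(xx* y*y) = φ(xx*) φ(y*y) = 0`.

To build `φ`, take a `*`-algebra `B` with a character `κ`, a Hermitian functional `ψ` and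
`u ∈ ker κ` whose non-zero `*`-moments under `ψ` are those of the words `(u u*)^k`. On `B ⊗ B` put
`φ = κ ⊗ κ + (ψ - κ) ⊗ (ψ - κ)`, `x = u ⊗ 1` and `y = 1 ⊗ u*`. One may take `B = M₂(ℂ) × ℂ`,
`u = (E₁₂, 0)`, `ψ(b, c) = b₁₁` and `κ(b, c) = c`.
-/

open scoped TensorProduct

section ChiOrder

variable {n : ℕ} (χ : Fin n → Bool)

theorem chiRank_injective : Function.Injective (chiRank χ) := by
  intro i j h
  unfold chiRank at h
  ext
  split_ifs at h <;> omega

variable {χ} in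
theorem chiLT_of_left_of_right {i j : Fin n} (hi : χ i = true) (hj : χ j = false) :
    chiLT χ i j := by
  simp only [chiLT, chiRank, hi, hj, if_true, Bool.false_eq_true, if_false]
  omega

theorem pairwise_chiRank_le_left_append_reverse_right :
    ((List.finRange n).filter (χ ·) ++ ((List.finRange n).filter (!χ ·)).reverse).Pairwise
      (chiRank χ · ≤ chiRank χ ·) := by
  have increasing : (List.finRange n).Pairwise (· < ·) := List.pairwise_lt_finRange n
  rw [List.pairwise_append, List.pairwise_reverse, List.pairwise_filter, List.pairwise_filter]
  refine ⟨increasing.imp fun {i j} hij hi hj ↦ ?_, increasing.imp fun {i j} hij hi hj ↦ ?_,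
    fun i hi j hj ↦ (chiLT_of_left_of_right (χ := χ) ?_ ?_).le⟩
  · simpa only [chiRank, hi, hj, if_true, Fin.val_fin_le] using hij.le
  · rw [Bool.not_eq_true'] at hi hj
    simp only [chiRank, hi, hj, Bool.false_eq_true, if_false]
    omega
  · exact (List.mem_filter.mp hi).2
  · simpa using hj

theorem chiSorted_eq_left_append_reverse_right :
    chiSorted χ =
      (List.finRange n).filter (χ ·) ++ ((List.finRange n).filter (!χ ·)).reverse := by
  have sorted : (chiSorted χ).Pairwise (chiRank χ · ≤ chiRank χ ·) := by
    simpa only [chiSorted, decide_eq_true_eq] using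
      List.pairwise_mergeSort (le := fun i j ↦ decide (chiRank χ i ≤ chiRank χ j))
        (fun _ _ _ ↦ by simpa using le_trans) (fun i j ↦ by simpa using le_total _ _)
        (List.finRange n)
  have perm : (chiSorted χ).Perm
      ((List.finRange n).filter (χ ·) ++ ((List.finRange n).filter (!χ ·)).reverse) :=
    (List.mergeSort_perm _ _).trans <|
      (List.filter_append_perm (χ ·) (List.finRange n)).symm.trans <|
        (List.Perm.refl _).append (List.reverse_perm _).symm
  exact perm.eq_of_pairwise (fun i j _ _ hij hji ↦ chiRank_injective χ (hij.antisymm hji)) sorted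
    (pairwise_chiRank_le_left_append_reverse_right χ)

end ChiOrder

section MixedBlocks

variable {n : ℕ} {χ : Fin n → Bool} {P : Finset (Finset (Fin n))} {V W : Finset (Fin n)}

/-- A block is mixed if it contains both a left and a right index; words over non-mixed blocks are
the one-sided moments. -/
def IsMixed (χ : Fin n → Bool) (V : Finset (Fin n)) : Prop :=
  (∃ i ∈ V, χ i = true) ∧ ∃ i ∈ V, χ i = false

theorem IsPartition.eq_of_mem_of_mem (hP : IsPartition P) (hV : V ∈ P) (hW : W ∈ P) {i : Fin n}
    (hiV : i ∈ V) (hiW : i ∈ W) : V = W :=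
  (hP.2 i).unique ⟨hV, hiV⟩ ⟨hW, hiW⟩

theorem IsChiInterval.exists_mem_and_mem_of_isMixed (hV : IsChiInterval χ V)
    (hW : IsChiInterval χ W) (hVm : IsMixed χ V) (hWm : IsMixed χ W) : ∃ i, i ∈ V ∧ i ∈ W := by
  obtain ⟨⟨l, hl, hχl⟩, r, hr, hχr⟩ := hVm
  obtain ⟨⟨l', hl', hχl'⟩, r', hr', hχr'⟩ := hWm
  rcases lt_trichotomy (chiRank χ l) (chiRank χ l') with h | h | h
  · exact ⟨l', hV l l' r hl hr h (chiLT_of_left_of_right hχl' hχr), hl'⟩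
  · exact ⟨l, hl, chiRank_injective χ h ▸ hl'⟩
  · exact ⟨l, hl, hW l' l r' hl' hr' h (chiLT_of_left_of_right hχl hχr')⟩

theorem mem_BIset : P ∈ BIset χ ↔ IsPartition P ∧ ∀ V ∈ P, IsChiInterval χ V := by
  simp only [BIset, Finset.mem_filter, Finset.mem_univ, true_and]

theorem singleton_univ_mem_BIset [NeZero n] : {Finset.univ} ∈ BIset χ := by
  refine mem_BIset.mpr ⟨⟨?_, fun i ↦ ⟨Finset.univ, by simp, by simp⟩⟩, ?_⟩
  · simpa using (Finset.univ_nonempty (α := Fin n)).ne_empty.symm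
  · rintro V hV i j k - - - -
    simp [Finset.mem_singleton.mp hV]

theorem eq_singleton_univ_of_mem_BIset_of_isMixed [NeZero n] (hP : P ∈ BIset χ)
    (hmixed : ∀ V ∈ P, IsMixed χ V) : P = {Finset.univ} := by
  obtain ⟨hpart, hint⟩ := mem_BIset.mp hP
  have eq_of_mem : ∀ V ∈ P, ∀ W ∈ P, V = W := fun V hV W hW ↦ by
    obtain ⟨i, hiV, hiW⟩ := (hint V hV).exists_mem_and_mem_of_isMixed (hint W hW)
      (hmixed V hV) (hmixed W hW)
    exact hpart.eq_of_mem_of_mem hV hW hiV hiW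
  have eq_univ : ∀ V ∈ P, V = Finset.univ := fun V hV ↦ Finset.eq_univ_of_forall fun i ↦ by
    obtain ⟨W, ⟨hW, hiW⟩, -⟩ := hpart.2 i
    exact eq_of_mem V hV W hW ▸ hiW
  obtain ⟨V, ⟨hV, -⟩, -⟩ := hpart.2 0
  exact Finset.eq_singleton_iff_unique_mem.mpr ⟨eq_univ V hV ▸ hV, eq_univ⟩

end MixedBlocks

section Cumulants

variable {A : Type*} [Monoid A] (φ : A → ℂ) {n : ℕ}

theorem phiV_univ (a : Fin n → A) : phiV φ a Finset.univ = φ (List.ofFn a).prod := by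
  rw [phiV, Fin.sort_univ, List.ofFn_eq_map]

theorem phiV_singleton (a : Fin n → A) (i : Fin n) : phiV φ a {i} = φ (a i) := by
  simp only [phiV, Finset.sort_singleton, List.map_cons, List.map_nil, List.prod_singleton]

theorem Bcum_eq_apply_prod_of_phiV_eq_zero [NeZero n] {χ : Fin n → Bool} {a : Fin n → A}
    (hφ : ∀ V : Finset (Fin n), V.Nonempty → ¬ IsMixed χ V → phiV φ a V = 0) :
    Bcum φ χ a = φ (List.ofFn a).prod := by
  rw [Bcum, Finset.sum_eq_single_of_mem {Finset.univ} singleton_univ_mem_BIset]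
  · simp only [Finset.card_singleton, Nat.sub_self, pow_zero, one_mul, Finset.prod_singleton,
      phiV_univ]
  · intro P hP hne
    obtain ⟨V, hV, hVm⟩ : ∃ V ∈ P, ¬ IsMixed χ V := by
      by_contra! hmixed
      exact hne (eq_singleton_univ_of_mem_BIset_of_isMixed hP hmixed)
    have V_nonempty : V.Nonempty :=
      Finset.nonempty_iff_ne_empty.mpr fun h ↦ (mem_BIset.mp hP).1.1 (h ▸ hV)
    rw [Finset.prod_eq_zero hV (hφ V V_nonempty hVm), mul_zero]

end Cumulants

section BiBooleanIndependence

variable {n : ℕ} {K : Type*}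

theorem isMaxKernelBI_singletons (χ : Fin n → Bool) {ω : Fin n → K} (hω : ω.Injective) :
    IsMaxKernelBI χ ω (Finset.univ.image fun i ↦ {i}) := by
  have mem_singletons {V : Finset (Fin n)} :
      V ∈ Finset.univ.image (fun i ↦ ({i} : Finset (Fin n))) ↔ ∃ i, {i} = V := by
    simp only [Finset.mem_image, Finset.mem_univ, true_and]
  refine ⟨mem_BIset.mpr ⟨⟨?_, fun i ↦ ⟨{i}, by simp, ?_⟩⟩, ?_⟩, ?_, ?_⟩
  · simp
  · rintro V ⟨hV, hi⟩
    obtain ⟨j, rfl⟩ := mem_singletons.mp hV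
    rw [Finset.mem_singleton.mp hi]
  · intro V hV i j k hi hk hij hjk
    obtain ⟨m, rfl⟩ := mem_singletons.mp hV
    obtain rfl := Finset.mem_singleton.mp hi
    obtain rfl := Finset.mem_singleton.mp hk
    exact absurd (hij.trans hjk) (lt_irrefl _)
  · intro V hV i hi j hj
    obtain ⟨m, rfl⟩ := mem_singletons.mp hV
    rw [Finset.mem_singleton.mp hi, Finset.mem_singleton.mp hj]
  · intro Q hQ hker V hV
    obtain ⟨i, hi⟩ : V.Nonempty :=
      Finset.nonempty_iff_ne_empty.mpr fun h ↦ (mem_BIset.mp hQ).1.1 (h ▸ hV)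
    exact ⟨{i}, mem_singletons.mpr ⟨i, rfl⟩, fun j hj ↦
      Finset.mem_singleton.mpr (hω (hker V hV j hj i hi))⟩

variable {A : Type*} [Ring A] [Algebra ℂ A] {φ : A → ℂ} {Al Ar : K → NonUnitalSubalgebra ℂ A}

theorem BiBooleanIndep.apply_prod_ofFn (h : BiBooleanIndep φ Al Ar) [NeZero n]
    (χ : Fin n → Bool) {ω : Fin n → K} (hω : ω.Injective) {a : Fin n → A}
    (ha : ∀ i, a i ∈ (if χ i then Al (ω i) else Ar (ω i))) :
    φ (List.ofFn a).prod = ∏ i, φ (a i) := by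
  rw [h n NeZero.one_le χ ω a ha _ (isMaxKernelBI_singletons χ hω),
    Finset.prod_image fun i _ j _ hij ↦ Finset.singleton_injective hij]
  simp only [phiV_singleton]

theorem BiBooleanIndep.apply_mul (h : BiBooleanIndep φ Al Ar) {k k' : K} (hk : k ≠ k') {a b : A}
    (ha : a ∈ Al k) (hb : b ∈ Ar k') : φ (a * b) = φ a * φ b := by
  have hω : (![k, k']).Injective := by
    simpa [Function.Injective, Fin.forall_fin_two] using ⟨hk, hk.symm⟩
  have hab := h.apply_prod_ofFn ![true, false] hω (a := ![a, b]) fun i ↦ by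
    fin_cases i
    · exact ha
    · exact hb
  simpa using hab

end BiBooleanIndependence

section StarWords

variable {B : Type*} [Monoid B]

/-- The product of copies of `u` and `star u` prescribed by a list of bits, `true` standing for
`star u` as in `pairElem`. -/
def starWord [Star B] (u : B) (l : List Bool) : B :=
  (l.map fun e ↦ if e then star u else u).prod

theorem starWord_cons [Star B] (u : B) (e : Bool) (l : List Bool) :
    starWord u (e :: l) = (if e then star u else u) * starWord u l := by
  rw [starWord, List.map_cons, List.prod_cons, starWord]

theorem starWord_append [Star B] (u : B) (l l' : List Bool) :
    starWord u (l ++ l') = starWord u l * starWord u l' := by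
  rw [starWord, List.map_append, List.prod_append, starWord, starWord]

theorem starWord_singleton [Star B] (u : B) (e : Bool) :
    starWord u [e] = if e then star u else u := by
  rw [starWord, List.map_singleton, List.prod_singleton]

theorem map_starWord [Star B] {C F : Type*} [Monoid C] [Star C] [FunLike F B C]
    [MonoidHomClass F B C] [StarHomClass F B C] (f : F) (u : B) (l : List Bool) :
    f (starWord u l) = starWord (f u) l := by
  rw [starWord, map_list_prod, List.map_map, starWord]
  congr 2
  funext e
  cases e <;> simp [map_star]

theorem starWord_star [StarMul B] (u : B) (l : List Bool) :
    starWord (star u) l = star (starWord u l.reverse) := by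
  induction l with
  | nil => simp [starWord]
  | cons e l ih =>
    rw [starWord_cons, List.reverse_cons, starWord_append, starWord_singleton, star_mul, ih]
    cases e <;> simp

theorem starWord_zero {C : Type*} [Semiring C] [StarRing C] {l : List Bool} (hl : l ≠ []) :
    starWord (0 : C) l = 0 := by
  obtain ⟨e, l, rfl⟩ := List.exists_cons_of_ne_nil hl
  rw [starWord_cons, star_zero, ite_self, zero_mul]

/-- The bits of the word `(u u*)^k`. -/
def alternatingWord (k : ℕ) : List Bool :=
  (List.replicate k [false, true]).flatten

theorem alternatingWord_succ (k : ℕ) :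
    alternatingWord (k + 1) = false :: true :: alternatingWord k := by
  rw [alternatingWord, List.replicate_succ, List.flatten_cons, alternatingWord]
  rfl

theorem alternatingWord_add (k m : ℕ) :
    alternatingWord (k + m) = alternatingWord k ++ alternatingWord m := by
  rw [alternatingWord, List.replicate_add, List.flatten_append, alternatingWord, alternatingWord]

theorem even_length_alternatingWord (k : ℕ) : Even (alternatingWord k).length := by
  simp [alternatingWord]

theorem isChain_ne_alternatingWord (k : ℕ) : (alternatingWord k).IsChain (· ≠ ·) := by
  induction k with
  | zero => exact .nil
  | succ k ih =>
    rw [alternatingWord_succ]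
    cases k with
    | zero => simp [alternatingWord]
    | succ k => simpa [alternatingWord_succ] using ih

end StarWords

section CoupledFunctional

variable {B : Type*} [Ring B] [Algebra ℂ B]

/-- The functional `κ ⊗ κ + (ψ - κ) ⊗ (ψ - κ)` on `B ⊗ B`. When `κ 1 = ψ 1 = 1`, it takes the
value `ψ b * ψ c` at `b ⊗ c` if `b, c ∈ ker κ`, but vanishes at `b ⊗ 1` and `1 ⊗ c`. -/
noncomputable def coupledFunctional (κ ψ : B →ₗ[ℂ] ℂ) : B ⊗[ℂ] B →ₗ[ℂ] ℂ :=
  LinearMap.mul' ℂ ℂ ∘ₗ (TensorProduct.map κ κ + TensorProduct.map (ψ - κ) (ψ - κ))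

theorem coupledFunctional_tmul (κ ψ : B →ₗ[ℂ] ℂ) (b c : B) :
    coupledFunctional κ ψ (b ⊗ₜ c) = κ b * κ c + (ψ b - κ b) * (ψ c - κ c) := by
  simp [coupledFunctional]

variable [StarRing B] {κ : B →⋆ₐ[ℂ] ℂ} {ψ : B →ₗ[ℂ] ℂ} {u v : B}

theorem map_starWord_eq_zero (hu : κ u = 0) {l : List Bool} (hl : l ≠ []) :
    κ (starWord u l) = 0 := by
  rw [map_starWord, hu, starWord_zero hl]

theorem coupledFunctional_starWord_tmul_starWord (hu : κ u = 0) (hv : κ v = 0) {l l' : List Bool}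
    (hl : l ≠ [] ∨ l' ≠ []) :
    coupledFunctional κ ψ (starWord u l ⊗ₜ starWord v l') =
      (ψ (starWord u l) - κ (starWord u l)) * (ψ (starWord v l') - κ (starWord v l')) := by
  have κ_mul_κ : κ (starWord u l) * κ (starWord v l') = 0 :=
    mul_eq_zero.mpr (hl.imp (map_starWord_eq_zero hu) (map_starWord_eq_zero hv))
  rw [coupledFunctional_tmul]
  exact add_eq_right.mpr κ_mul_κ

theorem not_biBooleanIndep_coupledFunctional (hψ1 : ψ 1 = 1) (hu : κ u = 0)
    (hmoment : ψ (u * star u) ≠ 0) {K : Type*} {Al Ar : K → NonUnitalSubalgebra ℂ (B ⊗[ℂ] B)}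
    {k k' : K} (hk : k ≠ k')
    (hl : (u * star u) ⊗ₜ 1 ∈ Al k) (hr : 1 ⊗ₜ (u * star u) ∈ Ar k') :
    ¬ BiBooleanIndep (coupledFunctional κ ψ) Al Ar := by
  intro hindep
  have factor := hindep.apply_mul hk hl hr
  rw [Algebra.TensorProduct.tmul_mul_tmul, one_mul, mul_one] at factor
  simp [coupledFunctional_tmul, hu, hψ1, hmoment] at factor

variable [StarModule ℂ B]

theorem coupledFunctional_star {κ ψ : B →ₗ[ℂ] ℂ}
    (hκ : ∀ b, κ (star b) = star (κ b)) (hψ : ∀ b, ψ (star b) = star (ψ b)) (t : B ⊗[ℂ] B) :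
    coupledFunctional κ ψ (star t) = star (coupledFunctional κ ψ t) := by
  induction t with
  | zero => simp
  | tmul b c => simp [coupledFunctional_tmul, hκ, hψ]
  | add s t hs ht => rw [star_add, map_add, hs, ht, map_add, star_add]

theorem prod_map_pairElem_tmul (u v : B) {n : ℕ} (χ ε : Fin n → Bool) (L : List (Fin n)) :
    (L.map fun i ↦ pairElem (u ⊗ₜ[ℂ] (1 : B)) ((1 : B) ⊗ₜ[ℂ] v) (χ i) (ε i)).prod =
      starWord u ((L.filter (χ ·)).map ε) ⊗ₜ starWord v ((L.filter (!χ ·)).map ε) := by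
  induction L with
  | nil => rfl
  | cons i L ih =>
    rw [List.map_cons, List.prod_cons, ih]
    cases hχ : χ i <;> cases hε : ε i <;> simp [hχ, hε, pairElem, starWord_cons]

theorem phiV_coupledFunctional_eq_zero (hψ1 : ψ 1 = 1) (hu : κ u = 0) (hv : κ v = 0) {n : ℕ}
    {χ : Fin n → Bool} (ε : Fin n → Bool) {V : Finset (Fin n)} (hV : V.Nonempty)
    (hVm : ¬ IsMixed χ V) :
    phiV (coupledFunctional κ ψ)
      (fun i ↦ pairElem (u ⊗ₜ[ℂ] (1 : B)) ((1 : B) ⊗ₜ[ℂ] v) (χ i) (ε i)) V = 0 := by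
  obtain ⟨i, hi⟩ := hV
  rw [phiV, prod_map_pairElem_tmul]
  rcases not_and_or.mp hVm with no_left | no_right
  · have left_eq_nil : (V.sort (· ≤ ·)).filter (χ ·) = [] := by simpa using no_left
    have right_ne_nil : ((V.sort (· ≤ ·)).filter (!χ ·)).map ε ≠ [] := by
      simpa using ⟨i, hi, by simpa using fun h ↦ no_left ⟨i, hi, h⟩⟩
    rw [coupledFunctional_starWord_tmul_starWord hu hv (.inr right_ne_nil), left_eq_nil]
    simp [starWord, hψ1]
  · have right_eq_nil : (V.sort (· ≤ ·)).filter (!χ ·) = [] := by simpa using no_right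
    have left_ne_nil : ((V.sort (· ≤ ·)).filter (χ ·)).map ε ≠ [] := by
      simpa using ⟨i, hi, by simpa using fun h ↦ no_right ⟨i, hi, h⟩⟩
    rw [coupledFunctional_starWord_tmul_starWord hu hv (.inl left_ne_nil), right_eq_nil]
    simp [starWord, hψ1]

theorem Bcum_coupledFunctional_eq (hψ1 : ψ 1 = 1) (hu : κ u = 0) (hv : κ v = 0) {n : ℕ} [NeZero n]
    (χ ε : Fin n → Bool) :
    Bcum (coupledFunctional κ ψ) χ
        (fun i ↦ pairElem (u ⊗ₜ[ℂ] (1 : B)) ((1 : B) ⊗ₜ[ℂ] v) (χ i) (ε i)) =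
      coupledFunctional κ ψ
        (starWord u (((List.finRange n).filter (χ ·)).map ε) ⊗ₜ
          starWord v (((List.finRange n).filter (!χ ·)).map ε)) := by
  rw [Bcum_eq_apply_prod_of_phiV_eq_zero _
    fun V hV hVm ↦ phiV_coupledFunctional_eq_zero hψ1 hu hv ε hV hVm,
    List.ofFn_eq_map, prod_map_pairElem_tmul]

theorem etaDiagonalPair_coupledFunctional (hψ1 : ψ 1 = 1) (hψ : ∀ b, ψ (star b) = star (ψ b))
    (hu : κ u = 0) (hmoment : ∀ l, ψ (starWord u l) ≠ 0 → ∃ k, l = alternatingWord k) :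
    EtaDiagonalPair (coupledFunctional κ ψ) (u ⊗ₜ[ℂ] (1 : B)) ((1 : B) ⊗ₜ[ℂ] star u) := by
  intro n hn χ ε
  have : NeZero n := ⟨Nat.one_le_iff_ne_zero.mp hn⟩
  have hu' : κ (star u) = 0 := by rw [map_star, hu, star_zero]
  have alternating_of_ne {l : List Bool} (h : ψ (starWord u l) - κ (starWord u l) ≠ 0) :
      ∃ k, l = alternatingWord k := by
    rcases eq_or_ne l [] with rfl | hl
    · exact ⟨0, rfl⟩
    · exact hmoment l (by rwa [map_starWord_eq_zero hu hl, sub_zero] at h)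
  contrapose!
  rw [Bcum_coupledFunctional_eq hψ1 hu hu']
  set left := ((List.finRange n).filter (χ ·)).map ε
  set right := ((List.finRange n).filter (!χ ·)).map ε
  have sorted_eq : (chiSorted χ).map ε = left ++ right.reverse := by
    rw [chiSorted_eq_left_append_reverse_right, List.map_append, List.map_reverse]
  have length_eq : (left ++ right.reverse).length = n := by
    rw [← sorted_eq, List.length_map, chiSorted, List.length_mergeSort, List.length_finRange]
  have ne_nil : left ≠ [] ∨ right ≠ [] := by
    by_contra! h
    rw [h.1, h.2] at length_eq
    exact NeZero.ne n length_eq.symm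
  intro moment_ne_zero
  rw [coupledFunctional_starWord_tmul_starWord hu hu' ne_nil, starWord_star, hψ, map_star,
    ← star_sub, mul_ne_zero_iff, star_ne_zero] at moment_ne_zero
  obtain ⟨k, hk⟩ := alternating_of_ne moment_ne_zero.1
  obtain ⟨m, hm⟩ := alternating_of_ne moment_ne_zero.2
  rw [hk, hm, ← alternatingWord_add] at sorted_eq length_eq
  exact ⟨length_eq ▸ even_length_alternatingWord (k + m),
    sorted_eq ▸ isChain_ne_alternatingWord (k + m)⟩

end CoupledFunctional

section Model

open Matrix

/-- The `*`-algebra `M₂(ℂ) × ℂ`. The second factor carries a character which separates `1`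
from the non-empty words in elements of the first factor. -/
abbrev ModelAlgebra : Type :=
  Matrix (Fin 2) (Fin 2) ℂ × ℂ

/-- The vector state `(b, c) ↦ b₁₁`, in the role of `ψ`. -/
def modelState : ModelAlgebra →ₗ[ℂ] ℂ :=
  Matrix.entryLinearMap ℂ ℂ 0 0 ∘ₗ LinearMap.fst ℂ _ _

/-- The character `(b, c) ↦ c`, in the role of `κ`. -/
def modelCharacter : ModelAlgebra →⋆ₐ[ℂ] ℂ :=
  StarAlgHom.snd ℂ _ ℂ

/-- The partial isometry `(E₁₂, 0)`, in the role of `u`. -/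
def modelPartialIsometry : ModelAlgebra :=
  (single 0 1 1, 0)

theorem modelState_one : modelState 1 = 1 := rfl

theorem modelState_star (b : ModelAlgebra) : modelState (star b) = star (modelState b) := rfl

theorem exists_eq_alternatingWord_of_starWord_single_apply_ne_zero :
    ∀ l : List Bool, starWord (single 0 1 1 : Matrix (Fin 2) (Fin 2) ℂ) l 0 0 ≠ 0 →
      ∃ k, l = alternatingWord k
  | [], _ => ⟨0, rfl⟩
  | [e], h => by
    cases e <;> simp [starWord_singleton] at h
  | e :: e' :: l, h => by
    rw [starWord_cons, starWord_cons] at h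
    obtain ⟨rfl, rfl, tail_ne_zero⟩ : e = false ∧ e' = true ∧
        starWord (single 0 1 1 : Matrix (Fin 2) (Fin 2) ℂ) l 0 0 ≠ 0 := by
      cases e <;> cases e' <;> simp_all [star_eq_conjTranspose]
    obtain ⟨k, rfl⟩ := exists_eq_alternatingWord_of_starWord_single_apply_ne_zero l tail_ne_zero
    exact ⟨k + 1, (alternatingWord_succ k).symm⟩

theorem exists_eq_alternatingWord_of_modelState_starWord_ne_zero {l : List Bool}
    (h : modelState (starWord modelPartialIsometry l) ≠ 0) : ∃ k, l = alternatingWord k := by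
  apply exists_eq_alternatingWord_of_starWord_single_apply_ne_zero
  rwa [← show StarAlgHom.fst ℂ _ ℂ modelPartialIsometry = single 0 1 1 from rfl, ← map_starWord]

end Model

/-- There exist a `*`-probability space and an η-diagonal pair `(x, y)` such that the
pairs of non-unital subalgebras `(alg(xx*), alg(yy*))` and `(alg(x*x), alg(y*y))` are
not bi-Boolean independent. -/
theorem exists_etaDiagonal_pair_not_biBoolean_indep :
    ∃ (A : Type) (_ : Ring A) (_ : Algebra ℂ A) (_ : StarRing A) (_ : StarModule ℂ A)
      (φ : A →ₗ[ℂ] ℂ) (x y : A),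
      φ 1 = 1 ∧ (∀ a : A, φ (star a) = starRingEnd ℂ (φ a)) ∧
      EtaDiagonalPair (fun z => φ z) x y ∧
      ¬ BiBooleanIndep (fun z => φ z)
        (fun k : Bool => if k then NonUnitalAlgebra.adjoin ℂ {x * star x}
          else NonUnitalAlgebra.adjoin ℂ {star x * x})
        (fun k : Bool => if k then NonUnitalAlgebra.adjoin ℂ {y * star y}
          else NonUnitalAlgebra.adjoin ℂ {star y * y}) := by
  have moment_ne_zero : modelState (modelPartialIsometry * star modelPartialIsometry) ≠ 0 := by
    simp [modelState, modelPartialIsometry, Matrix.star_eq_conjTranspose]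
  refine ⟨ModelAlgebra ⊗[ℂ] ModelAlgebra, inferInstance, inferInstance, inferInstance,
    inferInstance, coupledFunctional modelCharacter modelState, modelPartialIsometry ⊗ₜ 1,
    1 ⊗ₜ star modelPartialIsometry, ?_, ?_, ?_, ?_⟩
  · simp [Algebra.TensorProduct.one_def, coupledFunctional_tmul, modelState_one]
  · exact coupledFunctional_star (map_star modelCharacter) modelState_star
  · exact etaDiagonalPair_coupledFunctional modelState_one modelState_star rfl
      fun _ ↦ exists_eq_alternatingWord_of_modelState_starWord_ne_zero
  · refine not_biBooleanIndep_coupledFunctional modelState_one rfl moment_ne_zero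
      (k := true) (k' := false) (by decide) ?_ ?_ <;> simp
end

section
/- Let A be a unital C*-algebra and φ a faithful tracial state on A. Let x, y ∈ A, let u ∈ A be any unitary such that {u} and {x, y} are *-free, and assume that there exists a Haar unitary v ∈ A such that {v}, {u} and {x, y} are *-free. If the pair (x, y) satisfies condition (3.6), then the pairs (x, y) and (ux, uy) have the same bi-*-distribution. -/
section
variable {A : Type*} [Ring A] [Algebra ℂ A] [StarRing A] [StarModule ℂ A]

/-- The alternating product `x^{ω(1)} ⋯ x^{ω(k₁)} y^{ω(k₁+1)} ⋯ y^{ω(m)}`: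
the first `k₁` letters are from `{x, x*}`, the remaining ones from `{y, y*}`,
with star-parities given by `ω` (`true` = starred). -/
def altProd (x y : A) (m k₁ : ℕ) (ω : Fin m → Bool) : A :=
  (List.ofFn (fun t : Fin m =>
    if t.val < k₁ then (if ω t then star x else x)
    else (if ω t then star y else y))).prod

/-- The factor of the sets `P_{i,j}(x,y)`: for odd length the alternating product itself,
for even length the centered alternating product `z - φ(z)·1`. -/
noncomputable def facElt (φ : A → ℂ) (x y : A) (m k₁ : ℕ) (ω : Fin m → Bool) : A :=
  if Odd m then altProd x y m k₁ ω
  else altProd x y m k₁ ω - φ (altProd x y m k₁ ω) • (1 : A)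

/-- Condition (3.6): the expectations of the admissible products
`p_{i₁,i₂} p_{i₂,i₃} ⋯ p_{i_{n-1},i_n}` of factors from the sets `P_{i,j}(x,y)` vanish.
Factor `i` is an alternating word of length `len i ≥ 1` with `kk i` letters from
`{x, x*}` followed by `len i - kk i` letters from `{y, y*}`; the chain condition links the
second index of each factor with the first index of the next one; and the factors are
ordered so that either (i) the `x`-only factors precede the `y`-only factors, or (ii)
exactly one factor mixes letters of both types, with `x`-only factors before it and
`y`-only factors after it. -/
noncomputable def Condition36 (φ : A → ℂ) (x y : A) : Prop :=
  ∀ N : ℕ, 1 ≤ N → ∀ len kk : Fin N → ℕ, ∀ ω : (i : Fin N) → Fin (len i) → Bool,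
    (∀ i, 1 ≤ len i) →
    (∀ i, kk i ≤ len i) →
    (∀ i, (List.ofFn (ω i)).Chain' (· ≠ ·)) →
    (∀ i : Fin N, ∀ h : i.val + 1 < N,
      (List.ofFn (ω ⟨i.val + 1, h⟩)).headD false =
        (if Odd (len i) then (List.ofFn (ω i)).headD false
          else !(List.ofFn (ω i)).headD false)) →
    ((∃ m : ℕ, m ≤ N ∧ (∀ i : Fin N, i.val < m → kk i = len i) ∧
        (∀ i : Fin N, m ≤ i.val → kk i = 0)) ∨
     (∃ m : Fin N, (∀ i : Fin N, i.val < m.val → kk i = len i) ∧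
        0 < kk m ∧ kk m < len m ∧ (∀ i : Fin N, m.val < i.val → kk i = 0))) →
    φ (List.ofFn (fun i => facElt φ x y (len i) (kk i) (ω i))).prod = 0

/-- The pairs `(x, y)` and `(x', y')` have the same bi-`*`-distribution. -/
def SameBiDist (φ : A → ℂ) (x y x' y' : A) : Prop :=
  ∀ n : ℕ, 1 ≤ n → ∀ k : ℕ, k ≤ n → ∀ ω : Fin n → Bool,
    φ (altProd x y n k ω) = φ (altProd x' y' n k ω)

/-- A Haar unitary. -/
def IsHaarUnitary (φ : A → ℂ) (u : A) : Prop :=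
  u * star u = 1 ∧ star u * u = 1 ∧
  ∀ n : ℕ, 1 ≤ n → φ (u ^ n) = 0 ∧ φ ((star u) ^ n) = 0

/-- `*`-freeness of a family of subsets: alternating products of centered elements of the
generated unital `*`-subalgebras have zero expectation. -/
def FreeFamily (φ : A → ℂ) {ι : Type*} (S : ι → Set A) : Prop :=
  ∀ m : ℕ, 1 ≤ m → ∀ idx : Fin m → ι,
    (∀ i : Fin m, ∀ h : i.val + 1 < m, idx i ≠ idx ⟨i.val + 1, h⟩) →
    ∀ a : Fin m → A,
      (∀ i, a i ∈ StarAlgebra.adjoin ℂ (S (idx i)) ∧ φ (a i) = 0) →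
      φ (List.ofFn a).prod = 0

end

/-!
Cut a word into maximal alternating blocks and center the blocks of even length. Expanding the
centered blocks shows that a condition of type (3.6) computes every moment from shorter ones and
from the moments of even alternating words. It therefore suffices that `(ux, uy)` has the same
even alternating moments as `(x, y)` and again satisfies the condition.

Passing from `x` to `ux` turns each centered block `f` into one of `f`, `uf`, `fu*`, `ufu*`. Hence
a product of twisted blocks interleaves the product of the old ones with elements of the algebra
generated by `u`. Splitting each of these elements into its centered part and a scalar leaves
alternating products of centered elements, which vanish by freeness: the factors between two
centered elements of the algebra of `u` are products of consecutive old blocks, and these are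
centered by (3.6).
-/

theorem map_sub_map_smul_one {R A : Type*} [CommRing R] [Ring A] [Algebra R A] {φ : A →ₗ[R] R}
    (hφ1 : φ 1 = 1) (a : A) : φ (a - φ a • 1) = 0 := by
  simp [hφ1]

theorem sub_smul_one_mem {R A σ : Type*} [Ring A] [SMul R A] [SetLike σ A] [SubringClass σ A]
    [SMulMemClass σ R A] {t : σ} {a : A} (ha : a ∈ t) (c : R) : a - c • 1 ∈ t :=
  sub_mem ha (SMulMemClass.smul_mem c (one_mem t))

section FreeProducts

variable {A ι : Type*} [Ring A] [Algebra ℂ A] [StarRing A] [StarModule ℂ A]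
  {φ : A →ₗ[ℂ] ℂ} {S : ι → Set A} {i j : ι}

theorem FreeFamily.map_prod_eq_zero (hfree : FreeFamily (fun z => φ z) S) {l : List (ι × A)}
    (hl : l ≠ []) (hchain : l.IsChain fun p q => p.1 ≠ q.1)
    (hcentered : ∀ p ∈ l, p.2 ∈ StarAlgebra.adjoin ℂ (S p.1) ∧ φ p.2 = 0) :
    φ (l.map Prod.snd).prod = 0 := by
  have hprod := hfree l.length (List.length_pos_iff.2 hl) (fun k => l[k].1)
    (fun k hk => List.isChain_iff_getElem.1 hchain k hk)
    (fun k => l[k].2) (fun k => hcentered _ (List.getElem_mem _))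
  simpa only [Fin.getElem_fin, List.ofFn_getElem_eq_map l Prod.snd] using hprod

/-- The span of the alternating products of centered elements of the algebras generated by the
`S k` whose first factor is taken from the algebra generated by `S i`. -/
def reducedSpan (φ : A → ℂ) (S : ι → Set A) (i : ι) : Submodule ℂ A :=
  Submodule.span ℂ {z | ∃ (a : A) (l : List (ι × A)),
    ((i, a) :: l).IsChain (fun p q => p.1 ≠ q.1) ∧
    (∀ p ∈ (i, a) :: l, p.2 ∈ StarAlgebra.adjoin ℂ (S p.1) ∧ φ p.2 = 0) ∧
    (((i, a) :: l).map Prod.snd).prod = z}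

theorem mem_reducedSpan {a : A} (ha : a ∈ StarAlgebra.adjoin ℂ (S i)) (hφa : φ a = 0) :
    a ∈ reducedSpan φ S i :=
  Submodule.subset_span ⟨a, [], by simp, by simp [ha, hφa], by simp⟩

theorem mul_mem_reducedSpan (hij : i ≠ j) {a z : A} (ha : a ∈ StarAlgebra.adjoin ℂ (S i))
    (hφa : φ a = 0) (hz : z ∈ reducedSpan φ S j) : a * z ∈ reducedSpan φ S i := by
  induction hz using Submodule.span_induction with
  | mem z hz =>
    obtain ⟨b, l, hchain, hcentered, rfl⟩ := hz
    exact Submodule.subset_span ⟨a, (j, b) :: l, List.isChain_cons_cons.2 ⟨hij, hchain⟩,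
      List.forall_mem_cons.2 ⟨⟨ha, hφa⟩, hcentered⟩, by simp⟩
  | zero => simp
  | add z z' _ _ hz hz' => simpa only [mul_add] using add_mem hz hz'
  | smul c z _ hz => simpa only [mul_smul_comm] using Submodule.smul_mem _ c hz

theorem FreeFamily.map_eq_zero_of_mem_reducedSpan (hfree : FreeFamily (fun z => φ z) S) {z : A}
    (hz : z ∈ reducedSpan φ S i) : φ z = 0 := by
  suffices h : reducedSpan φ S i ≤ LinearMap.ker φ from h hz
  refine Submodule.span_le.2 ?_
  rintro _ ⟨a, l, hchain, hcentered, rfl⟩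
  exact hfree.map_prod_eq_zero (List.cons_ne_nil _ _) hchain hcentered

theorem FreeFamily.map_mul_eq_zero_of_mem_reducedSpan (hfree : FreeFamily (fun z => φ z) S)
    (hφ1 : φ 1 = 1) (hij : i ≠ j) {w z : A} (hw : w ∈ StarAlgebra.adjoin ℂ (S i))
    (hz : z ∈ reducedSpan φ S j) : φ (w * z) = 0 := by
  have hcentered : φ ((w - φ w • 1) * z) = 0 :=
    hfree.map_eq_zero_of_mem_reducedSpan
      (mul_mem_reducedSpan hij (sub_smul_one_mem hw _) (map_sub_map_smul_one hφ1 w) hz)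
  have hscalar : φ z = 0 := hfree.map_eq_zero_of_mem_reducedSpan hz
  simpa [sub_mul, hscalar] using hcentered

/-- The scalar part of `w` lets the centered element `a` merge with `z`. -/
theorem mul_mul_mem_reducedSpan (hij : i ≠ j) {a w z : A} (ha : a ∈ StarAlgebra.adjoin ℂ (S j))
    (hφa : φ a = 0) (hwz : (w - φ w • 1) * z ∈ reducedSpan φ S i)
    (haz : a * z ∈ reducedSpan φ S j) : a * (w * z) ∈ reducedSpan φ S j := by
  have split : a * (w * z) = a * ((w - φ w • 1) * z) + φ w • (a * z) := by
    simp [sub_mul, mul_sub]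
  rw [split]
  exact add_mem (mul_mem_reducedSpan hij.symm ha hφa hwz) (Submodule.smul_mem _ _ haz)

/-- The elements `v * a * v'` with `v` and `v'` in the `*`-algebra generated by `T`; such elements
are the factors in which multiplication by a free unitary turns the blocks of a word. -/
def sandwich (T : Set A) (a : A) : Set A :=
  {b | ∃ v ∈ StarAlgebra.adjoin ℂ T, ∃ v' ∈ StarAlgebra.adjoin ℂ T, b = v * a * v'}

theorem prod_mul_prod_mem_reducedSpan (hφ1 : φ 1 = 1) (hij : i ≠ j) {L G : List A}
    (hG : List.Forall₂ (fun f g => g ∈ sandwich (S i) f) L G) {F : List A} (hF : F ≠ [])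
    (hmem : ∀ a ∈ F ++ L, a ∈ StarAlgebra.adjoin ℂ (S j))
    (hcentered : ∀ l, l ≠ [] → l <:+: F ++ L → φ l.prod = 0)
    {w : A} (hw : w ∈ StarAlgebra.adjoin ℂ (S i)) :
    F.prod * (w * G.prod) ∈ reducedSpan φ S j := by
  induction hG generalizing F w with
  | nil =>
    have hFmem : F.prod ∈ StarAlgebra.adjoin ℂ (S j) := list_prod_mem (by simpa using hmem)
    have hFφ : φ F.prod = 0 := hcentered F hF (by simp)
    refine mul_mul_mem_reducedSpan hij hFmem hFφ ?_ ?_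
    · simpa using mem_reducedSpan (sub_smul_one_mem hw _) (map_sub_map_smul_one hφ1 w)
    · simpa using mem_reducedSpan hFmem hFφ
  | @cons f _ L G hfg _ ih =>
    obtain ⟨v, hv, v', hv', rfl⟩ := hfg
    have hFmem : F.prod ∈ StarAlgebra.adjoin ℂ (S j) :=
      list_prod_mem fun a ha => hmem a (List.mem_append_left _ ha)
    have hFφ : φ F.prod = 0 := hcentered F hF (List.prefix_append _ _).isInfix
    have hfresh : f * (v' * G.prod) ∈ reducedSpan φ S j := by
      simpa using ih (F := [f]) (by simp) (fun a ha => hmem a (List.mem_append_right _ ha))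
        (fun l hl hsub => hcentered l hl (hsub.trans (List.suffix_append _ _).isInfix)) hv'
    have hmerged : F.prod * (f * (v' * G.prod)) ∈ reducedSpan φ S j := by
      simpa [mul_assoc] using ih (F := F ++ [f]) (by simp) (by simpa using hmem)
        (by simpa using hcentered) hv'
    have hassoc : F.prod * (w * (v * f * v' :: G).prod) =
        F.prod * (w * v * (f * (v' * G.prod))) := by
      simp only [List.prod_cons, mul_assoc]
    rw [hassoc]
    exact mul_mul_mem_reducedSpan hij hFmem hFφ
      (mul_mem_reducedSpan hij (sub_smul_one_mem (mul_mem hw hv) _)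
        (map_sub_map_smul_one hφ1 _) hfresh) hmerged

theorem FreeFamily.map_prod_eq_zero_of_forall₂_sandwich (hfree : FreeFamily (fun z => φ z) S)
    (hφ1 : φ 1 = 1) (hij : i ≠ j) {L G : List A} (hL : L ≠ [])
    (hmem : ∀ a ∈ L, a ∈ StarAlgebra.adjoin ℂ (S j))
    (hcentered : ∀ l, l ≠ [] → l <:+: L → φ l.prod = 0)
    (hG : List.Forall₂ (fun f g => g ∈ sandwich (S i) f) L G) : φ G.prod = 0 := by
  cases hG with
  | nil => exact absurd rfl hL
  | @cons f _ L G hfg hG =>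
    obtain ⟨v, hv, v', hv', rfl⟩ := hfg
    have hreduced : f * (v' * G.prod) ∈ reducedSpan φ S j := by
      simpa using prod_mul_prod_mem_reducedSpan hφ1 hij hG (F := [f]) (by simp) hmem hcentered hv'
    simpa [mul_assoc] using hfree.map_mul_eq_zero_of_mem_reducedSpan hφ1 hij hv hreduced

theorem FreeFamily.map_mul_mul (hfree : FreeFamily (fun z => φ z) S) (hφ1 : φ 1 = 1)
    (hij : i ≠ j) {v a v' : A} (hv : v ∈ StarAlgebra.adjoin ℂ (S i))
    (ha : a ∈ StarAlgebra.adjoin ℂ (S j)) (hv' : v' ∈ StarAlgebra.adjoin ℂ (S i)) :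
    φ (v * a * v') = φ a * φ (v * v') := by
  have hcentered : φ (v * (a - φ a • 1) * v') = 0 := by
    simpa using hfree.map_prod_eq_zero_of_forall₂_sandwich hφ1 hij (L := [a - φ a • 1])
      (by simp) (by simpa using sub_smul_one_mem ha _)
      (fun l hl hsub => by
        obtain rfl := ((List.infix_singleton_iff _ _).1 hsub).resolve_left hl
        simpa using map_sub_map_smul_one hφ1 a)
      (.cons ⟨v, hv, v', hv', rfl⟩ .nil)
  simpa [mul_sub, sub_mul, sub_eq_zero] using hcentered

end FreeProducts

section Words

variable {ι : Type*}

/-- Words in letters and their adjoints, `(i, true)` standing for the adjoint of the letter `i`,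
in which starred and unstarred letters alternate. -/
def IsAlternatingWord (w : List (ι × Bool)) : Prop :=
  w.IsChain fun p q => p.2 ≠ q.2

theorem IsAlternatingWord.getLast_snd {w : List (ι × Bool)} (hw : IsAlternatingWord w)
    (hne : w ≠ []) :
    (w.getLast hne).2 = if Odd w.length then (w.head hne).2 else !(w.head hne).2 := by
  induction w with
  | nil => exact absurd rfl hne
  | cons p w ih =>
    cases w with
    | nil => simp
    | cons q w =>
      obtain ⟨hpq, hqw⟩ := List.isChain_cons_cons.1 hw
      have hq : q.2 = !p.2 := Bool.eq_not.2 hpq.symm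
      rw [List.getLast_cons (List.cons_ne_nil q w), ih hqw, List.length_cons (a := p),
        List.head_cons, List.head_cons, hq]
      by_cases hodd : Odd (q :: w).length <;>
        simp only [hodd, Nat.odd_add_one, if_true, if_false, not_true, not_false_iff, Bool.not_not]

theorem IsAlternatingWord.head_snd_of_even {w : List (ι × Bool)} (hw : IsAlternatingWord w)
    (hne : w ≠ []) (heven : Even w.length) : (w.head hne).2 = !(w.getLast hne).2 := by
  rw [hw.getLast_snd hne, if_neg (Nat.not_odd_iff_even.2 heven), Bool.not_not]

/-- The sequences of alternating words that index the products in condition (3.6): each block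
starts with the parity with which the preceding one ends, so that the blocks cannot be merged. -/
structure IsBlockChain (L : List (List (ι × Bool))) : Prop where
  nil_notMem : [] ∉ L
  alternating : ∀ c ∈ L, IsAlternatingWord c
  linked : L.IsChain fun c d => ∃ hc hd, (c.getLast hc).2 = (d.head hd).2

theorem IsBlockChain.of_isInfix {L L' : List (List (ι × Bool))} (hL : IsBlockChain L)
    (h : L' <:+: L) : IsBlockChain L' where
  nil_notMem hmem := hL.nil_notMem (h.mem hmem)
  alternating c hc := hL.alternating c (h.mem hc)
  linked := by
    obtain ⟨s, t, rfl⟩ := h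
    exact hL.linked.left_of_append.right_of_append

theorem isBlockChain_splitBy (w : List (ι × Bool)) :
    IsBlockChain (w.splitBy fun p q => p.2 != q.2) where
  nil_notMem := List.nil_notMem_splitBy _ w
  alternating c hc := by simpa [IsAlternatingWord] using List.isChain_of_mem_splitBy hc
  linked := by simpa using List.isChain_getLast_head_splitBy (fun p q => p.2 != q.2) w

/-- The letter `(i, s)` evaluated at the family `x`. -/
def starLetter {A : Type*} [Star A] (x : ι → A) (p : ι × Bool) : A :=
  if p.2 then star (x p.1) else x p.1

/-- The word `w` evaluated at the family `x`. -/
def starEval {A : Type*} [Monoid A] [Star A] (x : ι → A) (w : List (ι × Bool)) : A :=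
  (w.map (starLetter x)).prod

@[simp]
theorem starEval_nil {A : Type*} [Monoid A] [Star A] (x : ι → A) : starEval x [] = 1 := rfl

@[simp]
theorem starEval_cons {A : Type*} [Monoid A] [Star A] (x : ι → A) (p : ι × Bool)
    (w : List (ι × Bool)) : starEval x (p :: w) = starLetter x p * starEval x w := by
  simp [starEval]

@[simp]
theorem starEval_append {A : Type*} [Monoid A] [Star A] (x : ι → A) (v w : List (ι × Bool)) :
    starEval x (v ++ w) = starEval x v * starEval x w := by
  simp [starEval]

theorem starEval_mem {A σ : Type*} [Monoid A] [Star A] [SetLike σ A] [SubmonoidClass σ A]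
    [StarMemClass σ A] {t : σ} {x : ι → A} (hx : ∀ k, x k ∈ t) (w : List (ι × Bool)) :
    starEval x w ∈ t := by
  refine list_prod_mem (List.forall_mem_map.2 ?_)
  rintro ⟨k, _ | _⟩ -
  exacts [hx k, star_mem (hx k)]

variable {R A B : Type*} [CommRing R] [Ring A] [Algebra R A] [Star A] [Ring B] [Algebra R B]
  [Star B] {φ : A →ₗ[R] R} {ψ : B →ₗ[R] R} {x : ι → A} {y : ι → B}
  {r : ι × Bool → ι × Bool → Prop}

/-- The value of a word, centered if the word has even length: for alternating words these are the
elements of the sets `P_{i,j}`. -/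
def centeredEval (φ : A →ₗ[R] R) (x : ι → A) (w : List (ι × Bool)) : A :=
  if Odd w.length then starEval x w else starEval x w - φ (starEval x w) • 1

theorem centeredEval_of_odd {w : List (ι × Bool)} (hw : Odd w.length) :
    centeredEval φ x w = starEval x w :=
  if_pos hw

theorem centeredEval_of_even {w : List (ι × Bool)} (hw : Even w.length) :
    centeredEval φ x w = starEval x w - φ (starEval x w) • 1 :=
  if_neg (Nat.not_odd_iff_even.2 hw)

theorem centeredEval_mem {σ : Type*} [SetLike σ A] [SubringClass σ A] [SMulMemClass σ R A]
    [StarMemClass σ A] {t : σ} (hx : ∀ k, x k ∈ t) (w : List (ι × Bool)) :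
    centeredEval φ x w ∈ t := by
  unfold centeredEval
  split_ifs
  exacts [starEval_mem hx w, sub_smul_one_mem (starEval_mem hx w) _]

/-- Condition (3.6) for a family `x` indexed by `ι`, the order in which letters may occur being
prescribed by `r`. -/
def BlockChainCondition (φ : A →ₗ[R] R) (x : ι → A) (r : ι × Bool → ι × Bool → Prop) : Prop :=
  ∀ L : List (List (ι × Bool)), L ≠ [] → IsBlockChain L → L.flatten.Pairwise r →
    φ (L.map (centeredEval φ x)).prod = 0

theorem map_starEval_mul_prod_centeredEval_eq_iff
    (heven : ∀ c, IsAlternatingWord c → Even c.length → φ (starEval x c) = ψ (starEval y c))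
    {v : List (ι × Bool)} {L : List (List (ι × Bool))} (hnil : [] ∉ L)
    (halt : ∀ c ∈ L, IsAlternatingWord c) (hr : (v ++ L.flatten).Pairwise r)
    (hshort : ∀ w : List (ι × Bool), w.length < (v ++ L.flatten).length → w.Pairwise r →
      φ (starEval x w) = ψ (starEval y w)) :
    φ (starEval x v * (L.map (centeredEval φ x)).prod) =
        ψ (starEval y v * (L.map (centeredEval ψ y)).prod) ↔
      φ (starEval x (v ++ L.flatten)) = ψ (starEval y (v ++ L.flatten)) := by
  induction L generalizing v with
  | nil => simp
  | cons c L ih =>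
    rw [List.mem_cons, not_or] at hnil
    rw [List.forall_mem_cons] at halt
    rw [List.flatten_cons, ← List.append_assoc] at hr hshort ⊢
    rw [← ih hnil.2 halt.2 hr hshort]
    rcases Nat.even_or_odd c.length with hc | hc
    · have hsub : (v ++ L.flatten).Sublist (v ++ c ++ L.flatten) :=
        (List.sublist_append_left v c).append_right _
      have hlt : (v ++ L.flatten).length < (v ++ c ++ L.flatten).length := by
        have hpos := List.length_pos_iff.2 (Ne.symm hnil.1)
        simp only [List.length_append]
        omega
      have hrest : φ (starEval x v * (L.map (centeredEval φ x)).prod) =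
          ψ (starEval y v * (L.map (centeredEval ψ y)).prod) :=
        (ih hnil.2 halt.2 (hr.sublist hsub) fun w hw => hshort w (hw.trans hlt)).2
          (hshort _ hlt (hr.sublist hsub))
      simp [centeredEval_of_even hc, mul_sub, sub_mul, mul_assoc, hrest, heven c halt.1 hc]
    · simp [centeredEval_of_odd hc, mul_assoc]

theorem BlockChainCondition.map_starEval_eq (hx : BlockChainCondition φ x r)
    (hy : BlockChainCondition ψ y r)
    (heven : ∀ c, IsAlternatingWord c → Even c.length → φ (starEval x c) = ψ (starEval y c))
    {w : List (ι × Bool)} (hw : w.Pairwise r) : φ (starEval x w) = ψ (starEval y w) := by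
  induction hn : w.length using Nat.strong_induction_on generalizing w with
  | _ n ih =>
    subst hn
    rcases eq_or_ne w [] with rfl | hne
    · exact heven [] List.isChain_nil (by simp)
    set L := w.splitBy fun p q => p.2 != q.2
    have hflat : L.flatten = w := List.flatten_splitBy _ w
    have hLne : L ≠ [] := List.splitBy_ne_nil.2 hne
    have hchain : IsBlockChain L := isBlockChain_splitBy w
    have hvanish : φ (L.map (centeredEval φ x)).prod = ψ (L.map (centeredEval ψ y)).prod :=
      (hx L hLne hchain (by rwa [hflat])).trans (hy L hLne hchain (by rwa [hflat])).symm
    have hiff := map_starEval_mul_prod_centeredEval_eq_iff heven (v := []) hchain.nil_notMem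
      hchain.alternating (by rwa [List.nil_append, hflat]) fun w' hlt hw' =>
        ih w'.length (by rwa [List.nil_append, hflat] at hlt) hw' rfl
    rw [List.nil_append, hflat, starEval_nil, starEval_nil, one_mul, one_mul] at hiff
    exact hiff.1 hvanish

end Words

section UnitaryTwist

variable {ι A : Type*} {u : A}

/-- The factor to the left of a block of `u * x` whose first letter has parity `s`, when `u` is
moved to the ends of the block. -/
def leftFactor [One A] (u : A) (s : Bool) : A := if s then 1 else u

/-- The factor to the right of a block of `u * x` whose last letter has parity `s`, when `u` is
moved to the ends of the block. -/
def rightFactor [One A] [Star A] (u : A) (s : Bool) : A := if s then star u else 1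

theorem leftFactor_mem {σ : Type*} [One A] [SetLike σ A] [OneMemClass σ A] {t : σ} (hu : u ∈ t)
    (s : Bool) : leftFactor u s ∈ t := by
  cases s
  exacts [hu, one_mem t]

theorem rightFactor_mem {σ : Type*} [One A] [Star A] [SetLike σ A] [OneMemClass σ A]
    [StarMemClass σ A] {t : σ} (hu : u ∈ t) (s : Bool) : rightFactor u s ∈ t := by
  cases s
  exacts [one_mem t, star_mem hu]

section Monoid

variable [Monoid A] [StarMul A]

theorem starLetter_mul (u : A) (x : ι → A) (p : ι × Bool) :
    starLetter (fun k => u * x k) p = leftFactor u p.2 * starLetter x p * rightFactor u p.2 := by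
  rcases p with ⟨k, _ | _⟩ <;> simp [starLetter, leftFactor, rightFactor]

theorem rightFactor_mul_leftFactor_not (hu : star u * u = 1) (s : Bool) :
    rightFactor u s * leftFactor u (!s) = 1 := by
  cases s <;> simp [leftFactor, rightFactor, hu]

theorem leftFactor_not_mul_rightFactor (hu : u * star u = 1) (s : Bool) :
    leftFactor u (!s) * rightFactor u s = 1 := by
  cases s <;> simp [leftFactor, rightFactor, hu]

theorem IsAlternatingWord.starEval_mul (hu : star u * u = 1) (x : ι → A) {w : List (ι × Bool)}
    (hw : IsAlternatingWord w) (hne : w ≠ []) :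
    starEval (fun k => u * x k) w =
      leftFactor u (w.head hne).2 * starEval x w * rightFactor u (w.getLast hne).2 := by
  induction w with
  | nil => exact absurd rfl hne
  | cons p w ih =>
    cases w with
    | nil => simp [starLetter_mul]
    | cons q w =>
      obtain ⟨hpq, hqw⟩ := List.isChain_cons_cons.1 hw
      have hq : q.2 = !p.2 := Bool.eq_not.2 hpq.symm
      calc starEval (fun k => u * x k) (p :: q :: w)
          = leftFactor u p.2 * starLetter x p * (rightFactor u p.2 * leftFactor u (!p.2)) *
              starEval x (q :: w) * rightFactor u ((q :: w).getLast (by simp)).2 := by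
            rw [starEval_cons, ih hqw (by simp), starLetter_mul, List.head_cons, hq]
            simp only [mul_assoc]
        _ = _ := by
            rw [rightFactor_mul_leftFactor_not hu]
            simp [mul_assoc]

end Monoid

variable {κ : Type*} [Ring A] [Algebra ℂ A] [StarRing A] [StarModule ℂ A] {φ : A →ₗ[ℂ] ℂ}
  {S : κ → Set A} {i j : κ} {x : ι → A} {T : Set A}

theorem FreeFamily.map_starEval_mul_of_even (hfree : FreeFamily (fun z => φ z) S) (hφ1 : φ 1 = 1)
    (hij : i ≠ j) (hu : u ∈ unitary A) (huS : u ∈ StarAlgebra.adjoin ℂ (S i))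
    (hxS : ∀ k, x k ∈ StarAlgebra.adjoin ℂ (S j)) {c : List (ι × Bool)}
    (hc : IsAlternatingWord c) (heven : Even c.length) :
    φ (starEval (fun k => u * x k) c) = φ (starEval x c) := by
  rcases eq_or_ne c [] with rfl | hne
  · rfl
  rw [hc.starEval_mul hu.1 x hne, hfree.map_mul_mul hφ1 hij (leftFactor_mem huS _)
    (starEval_mem hxS c) (rightFactor_mem huS _),
    hc.head_snd_of_even hne heven, leftFactor_not_mul_rightFactor hu.2, hφ1, mul_one]

theorem centeredEval_mul_mem_sandwich (hu : u ∈ unitary A) (huT : u ∈ StarAlgebra.adjoin ℂ T)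
    {c : List (ι × Bool)} (hc : IsAlternatingWord c) (hne : c ≠ [])
    (heven : Even c.length → φ (starEval (fun k => u * x k) c) = φ (starEval x c)) :
    centeredEval φ (fun k => u * x k) c ∈ sandwich T (centeredEval φ x c) := by
  refine ⟨_, leftFactor_mem huT (c.head hne).2, _,
    rightFactor_mem huT (c.getLast hne).2, ?_⟩
  rcases Nat.even_or_odd c.length with hlen | hlen
  · rw [centeredEval_of_even hlen, centeredEval_of_even hlen, heven hlen,
      hc.starEval_mul hu.1 x hne, hc.head_snd_of_even hne hlen]
    simp only [mul_sub, sub_mul, mul_smul_comm, smul_mul_assoc, mul_one,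
      leftFactor_not_mul_rightFactor hu.2]
  · rw [centeredEval_of_odd hlen, centeredEval_of_odd hlen, hc.starEval_mul hu.1 x hne]

theorem FreeFamily.blockChainCondition_mul (hfree : FreeFamily (fun z => φ z) S) (hφ1 : φ 1 = 1)
    (hij : i ≠ j) (hu : u ∈ unitary A) (huS : u ∈ StarAlgebra.adjoin ℂ (S i))
    (hxS : ∀ k, x k ∈ StarAlgebra.adjoin ℂ (S j)) {r : ι × Bool → ι × Bool → Prop}
    (hx : BlockChainCondition φ x r) : BlockChainCondition φ (fun k => u * x k) r := by
  intro L hL hchain hr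
  refine hfree.map_prod_eq_zero_of_forall₂_sandwich hφ1 hij (L := L.map (centeredEval φ x))
    (by simpa using hL) (List.forall_mem_map.2 fun c _ => centeredEval_mem hxS c) ?_ ?_
  · intro l hl hsub
    obtain ⟨L', hL', rfl⟩ := List.infix_map_iff.1 hsub
    exact hx L' (by simpa using hl) (hchain.of_isInfix hL') (hr.sublist hL'.sublist.flatten)
  · rw [List.forall₂_map_left_iff, List.forall₂_map_right_iff, List.forall₂_same]
    intro c hc
    exact centeredEval_mul_mem_sandwich hu huS (hchain.alternating c hc)
      (ne_of_mem_of_not_mem hc hchain.nil_notMem)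
      (hfree.map_starEval_mul_of_even hφ1 hij hu huS hxS (hchain.alternating c hc))

theorem FreeFamily.map_starEval_mul (hfree : FreeFamily (fun z => φ z) S) (hφ1 : φ 1 = 1)
    (hij : i ≠ j) (hu : u ∈ unitary A) (huS : u ∈ StarAlgebra.adjoin ℂ (S i))
    (hxS : ∀ k, x k ∈ StarAlgebra.adjoin ℂ (S j)) {r : ι × Bool → ι × Bool → Prop}
    (hx : BlockChainCondition φ x r) {w : List (ι × Bool)} (hw : w.Pairwise r) :
    φ (starEval (fun k => u * x k) w) = φ (starEval x w) :=
  (hfree.blockChainCondition_mul hφ1 hij hu huS hxS hx).map_starEval_eq hx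
    (fun _ => hfree.map_starEval_mul_of_even hφ1 hij hu huS hxS) hw

end UnitaryTwist

section Pairs

variable {A : Type*}

/-- The pair `(x, y)` as a family, so that `false` indexes `x` and `true` indexes `y`; since
`false < true`, the words of condition (3.6) are those whose first components are monotone. -/
def pairFamily (x y : A) : Bool → A := fun b => if b then y else x

theorem lt_countP_iff_fst_eq_false {β : Type*} {w : List (Bool × β)}
    (hw : w.Pairwise fun p q => p.1 ≤ q.1) {t : ℕ} (ht : t < w.length) :
    t < w.countP (fun p => !p.1) ↔ w[t].1 = false := by
  induction w generalizing t with
  | nil => simp at ht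
  | cons p w ih =>
    obtain ⟨hp, hw⟩ := List.pairwise_cons.1 hw
    cases hp1 : p.1
    · cases t with
      | zero => simp [hp1]
      | succ t => simpa [hp1] using ih hw (Nat.lt_of_succ_lt_succ ht)
    · have htrue : ∀ q ∈ p :: w, q.1 = true :=
        List.forall_mem_cons.2 ⟨hp1, fun q hq => Bool.eq_true_of_true_le (hp1 ▸ hp q hq)⟩
      have hcount : (p :: w).countP (fun p => !p.1) = 0 := by
        simpa [List.countP_eq_zero] using htrue
      simp [hcount, htrue _ (List.getElem_mem ht)]

/-- The first block containing a letter of `y` is where the words change from `x` to `y`: if it also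
contains a letter of `x`, this is alternative (ii) of condition (3.6), otherwise alternative (i). -/
theorem monotone_blocks_cases {β : Type*} {L : List (List (Bool × β))}
    (hL : L.flatten.Pairwise fun p q => p.1 ≤ q.1) :
    (∃ m ≤ L.length,
      (∀ i : Fin L.length, i.val < m → L[i].countP (fun p => !p.1) = L[i].length) ∧
      ∀ i : Fin L.length, m ≤ i.val → L[i].countP (fun p => !p.1) = 0) ∨
    ∃ m : Fin L.length,
      (∀ i : Fin L.length, i.val < m.val → L[i].countP (fun p => !p.1) = L[i].length) ∧
      0 < L[m].countP (fun p => !p.1) ∧ L[m].countP (fun p => !p.1) < L[m].length ∧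
      ∀ i : Fin L.length, m.val < i.val → L[i].countP (fun p => !p.1) = 0 := by
  set m := L.findIdx (fun c => c.any Prod.fst)
  have hbefore (i : Fin L.length) (hi : i.val < m) :
      L[i].countP (fun p => !p.1) = L[i].length := by
    simpa using List.not_of_lt_findIdx hi
  rcases List.findIdx_le_length.eq_or_lt with hmL | hmL
  · exact .inl ⟨m, hmL.le, hbefore, fun i hi => absurd i.isLt (by omega)⟩
  obtain ⟨p, hp, hp1⟩ : ∃ p ∈ L[m], p.1 = true := by
    simpa using List.findIdx_getElem (p := fun c : List (Bool × β) => c.any Prod.fst) (w := hmL)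
  have hafter (i : Fin L.length) (hi : m < i.val) : L[i].countP (fun p => !p.1) = 0 := by
    have hle : ∀ q ∈ L[i], p.1 ≤ q.1 :=
      List.pairwise_iff_getElem.1 (List.pairwise_flatten.1 hL).2 m i hmL i.isLt hi p hp
    refine List.countP_eq_zero.2 fun q hq => ?_
    simp [Bool.eq_true_of_true_le (hp1 ▸ hle q hq)]
  rcases Nat.eq_zero_or_pos (L[m].countP fun p => !p.1) with hpure | hmixed
  · refine .inl ⟨m, hmL.le, hbefore, fun i hi => ?_⟩
    rcases hi.eq_or_lt with heq | hlt
    · simpa only [Fin.getElem_fin, ← heq] using hpure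
    · exact hafter i hlt
  · refine .inr ⟨⟨m, hmL⟩, hbefore, hmixed, ?_, hafter⟩
    refine List.countP_le_length.lt_of_ne fun hall => ?_
    simpa [hp1] using List.countP_eq_length.1 hall p hp

theorem pairFamily_mul [Mul A] (u x y : A) :
    pairFamily (u * x) (u * y) = fun b => u * pairFamily x y b := by
  funext b
  cases b <;> rfl

variable [Ring A] [StarRing A]

theorem altProd_eq_starEval (x y : A) (n k : ℕ) (ω : Fin n → Bool) :
    altProd x y n k ω =
      starEval (pairFamily x y) (List.ofFn fun t : Fin n => (decide (k ≤ t.val), ω t)) := by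
  rw [altProd, starEval, List.map_ofFn]
  congr 2
  funext t
  rcases lt_or_ge t.val k with h | h
  · simp [starLetter, pairFamily, h, not_le.2 h]
  · simp [starLetter, pairFamily, h, not_lt.2 h]

theorem altProd_countP_eq_starEval (x y : A) {w : List (Bool × Bool)}
    (hw : w.Pairwise fun p q => p.1 ≤ q.1) :
    altProd x y w.length (w.countP fun p => !p.1) (fun t => w[t].2) =
      starEval (pairFamily x y) w := by
  rw [altProd_eq_starEval]
  congr 1
  refine List.ext_getElem (by simp) fun t _ ht => ?_
  rw [List.getElem_ofFn]
  refine Prod.ext ?_ rfl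
  have hcount := lt_countP_iff_fst_eq_false hw ht
  cases hfst : w[t].1 <;> simp_all

theorem pairwise_ofFn_decide_le (n k : ℕ) (ω : Fin n → Bool) :
    (List.ofFn fun t : Fin n => (decide (k ≤ t.val), ω t)).Pairwise fun p q => p.1 ≤ q.1 := by
  rw [List.pairwise_ofFn]
  intro s t hst
  simpa [Bool.le_iff_imp] using fun hk : k ≤ s.val => hk.trans hst.le

theorem headD_ofFn_snd {β : Type*} {w : List (β × Bool)} (hne : w ≠ []) :
    (List.ofFn fun t : Fin w.length => w[t].2).headD false = (w.head hne).2 := by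
  change (List.ofFn fun t : Fin w.length => w[t.val].2).headD false = _
  rw [List.ofFn_getElem_eq_map w Prod.snd, List.headD_eq_head?_getD]
  simp [List.head?_eq_some_head hne]

variable [Algebra ℂ A] {φ : A →ₗ[ℂ] ℂ} {x y : A}

theorem Condition36.blockChainCondition (h36 : Condition36 (fun z => φ z) x y) :
    BlockChainCondition φ (pairFamily x y) fun p q => p.1 ≤ q.1 := by
  intro L hL hchain hr
  have hne (i : Fin L.length) : L[i] ≠ [] :=
    ne_of_mem_of_not_mem (List.getElem_mem _) hchain.nil_notMem
  have hvanish := h36 L.length (List.length_pos_iff.2 hL) (fun i => L[i].length)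
    (fun i => L[i].countP fun p => !p.1) (fun i t => L[i][t].2)
    (fun i => List.length_pos_iff.2 (hne i)) (fun i => List.countP_le_length) ?_ ?_
    (monotone_blocks_cases hr)
  · have hfactor (i : Fin L.length) : facElt (fun z => φ z) x y L[i].length
        (L[i].countP fun p => !p.1) (fun t => L[i][t].2) =
          centeredEval φ (pairFamily x y) L[i] := by
      have hi := (List.pairwise_flatten.1 hr).1 L[i] (List.getElem_mem _)
      rw [facElt, altProd_countP_eq_starEval x y hi, centeredEval]
    simp only [hfactor] at hvanish
    simpa only [Fin.getElem_fin, List.ofFn_getElem_eq_map L (centeredEval φ (pairFamily x y))]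
      using hvanish
  · intro i
    change List.IsChain (· ≠ ·) (List.ofFn fun t : Fin L[i].length => L[i][t.val].2)
    rw [List.ofFn_getElem_eq_map L[i] Prod.snd, List.isChain_map]
    exact hchain.alternating _ (List.getElem_mem _)
  · intro i hi
    obtain ⟨_, _, hlink⟩ := List.isChain_iff_getElem.1 hchain.linked i.val hi
    have halt : IsAlternatingWord L[i] := hchain.alternating _ (List.getElem_mem _)
    rw [headD_ofFn_snd (hne i), headD_ofFn_snd (hne ⟨i.val + 1, hi⟩), ← halt.getLast_snd (hne i)]
    exact hlink.symm

variable [StarModule ℂ A] {u : A}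

theorem sameBiDist_of_condition36_unitary_general (hφ1 : φ 1 = 1)
    (hu : u * star u = 1 ∧ star u * u = 1)
    (hfree : FreeFamily (fun z => φ z) (fun b : Bool => if b then {u} else {x, y}))
    (h36 : Condition36 (fun z => φ z) x y) :
    SameBiDist (fun z => φ z) x y (u * x) (u * y) := by
  intro n _ k _ ω
  have huS : u ∈ StarAlgebra.adjoin ℂ (if true then {u} else {x, y} : Set A) :=
    StarAlgebra.subset_adjoin ℂ _ (by simp)
  have hxyS (b : Bool) :
      pairFamily x y b ∈ StarAlgebra.adjoin ℂ (if false then {u} else {x, y} : Set A) :=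
    StarAlgebra.subset_adjoin ℂ _ (by cases b <;> simp [pairFamily])
  have htwist := hfree.map_starEval_mul hφ1 (i := true) (j := false) (by decide) ⟨hu.2, hu.1⟩
    huS hxyS h36.blockChainCondition (pairwise_ofFn_decide_le n k ω)
  change φ (altProd x y n k ω) = φ (altProd (u * x) (u * y) n k ω)
  rw [altProd_eq_starEval, altProd_eq_starEval, pairFamily_mul, htwist]

end Pairs

/-- In a unital C*-algebra with a faithful tracial state, let `u` be any unitary `*`-free
from `{x, y}`, and suppose there is a Haar unitary `v` with `{v}`, `{u}`, `{x, y}`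
`*`-free. If `(x, y)` satisfies condition (3.6), then `(x, y)` and `(ux, uy)` have the
same bi-`*`-distribution. -/
theorem sameBiDist_of_condition36_unitary
    {A : Type*} [NormedRing A] [StarRing A] [CStarRing A] [NormedAlgebra ℂ A]
    [CompleteSpace A] [StarModule ℂ A]
    (φ : A →ₗ[ℂ] ℂ) (hφ1 : φ 1 = 1) (hφs : ∀ a : A, φ (star a) = starRingEnd ℂ (φ a))
    (hpos : ∀ a : A, 0 ≤ (φ (star a * a)).re ∧ (φ (star a * a)).im = 0)
    (hfaith : ∀ a : A, φ (star a * a) = 0 → a = 0)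
    (htr : ∀ a b : A, φ (a * b) = φ (b * a))
    (x y u : A) (hu : u * star u = 1 ∧ star u * u = 1)
    (hfree : FreeFamily (fun z => φ z) (fun b : Bool => if b then {u} else {x, y}))
    (hv : ∃ v : A, IsHaarUnitary (fun z => φ z) v ∧
      FreeFamily (fun z => φ z)
        (fun i : Fin 3 => if i = 0 then {v} else if i = 1 then {u} else {x, y}))
    (h36 : Condition36 (fun z => φ z) x y) :
    SameBiDist (fun z => φ z) x y (u * x) (u * y) := by
  exact sameBiDist_of_condition36_unitary_general hφ1 hu hfree h36
end
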